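/- For all vectors a, b : P → ℝ, the Euclidean dot product satisfies ⟨a,b⟩ = ⟨mat(D·((DᵀD)⁻¹·a)), mat(D·b)⟩_F, i.e., Σ_{p∈P} a(p)·b(p) = trace( (mat(D·((DᵀD)⁻¹·a)))ᵀ · mat(D·b) ). (The correct lifting of a gradient vector from ℝ^{n(n+1)/2} to a symmetric matrix is a ↦ mat(D·(DᵀD)⁻¹·a), not a ↦ mat(D·a).) -/

import Mathlib

open Matrix

/-- Index set `P = {(i,j) : i ≤ j}` of size `n(n+1)/2`. -/
abbrev SymIdx (n : ℕ) := {p : Fin n × Fin n // p.1 ≤ p.2}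

/-- The duplication matrix `D`, with `D (k,l) (i,j) = 1` if `(k,l) = (i,j)` or
`(k,l) = (j,i)`, and `0` otherwise. -/
def Dup (n : ℕ) : Matrix (Fin n × Fin n) (SymIdx n) ℝ :=
  fun kl q => if kl = q.1 ∨ kl = (q.1.2, q.1.1) then 1 else 0

/-- `vec(A) (k,l) = A k l`. -/
def vec {n : ℕ} (A : Matrix (Fin n) (Fin n) ℝ) : Fin n × Fin n → ℝ :=
  fun p => A p.1 p.2

/-- `hvec(A) (i,j) = A i j` for `i ≤ j`. -/
def hvec {n : ℕ} (A : Matrix (Fin n) (Fin n) ℝ) : SymIdx n → ℝ :=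
  fun q => A q.1.1 q.1.2

/-- Reshape a vector indexed by `Fin n × Fin n` into an `n × n` matrix. -/
def mat {n : ℕ} (v : Fin n × Fin n → ℝ) : Matrix (Fin n) (Fin n) ℝ :=
  fun k l => v (k, l)

theorem Dup_mulVec_apply (n : ℕ) (v : SymIdx n → ℝ) (q : SymIdx n) :
    (Dup n *ᵥ v) q.1 = v q := by
  have h : ∀ r : SymIdx n, (q.1 = r.1 ∨ q.1 = (r.1.2, r.1.1)) ↔ q = r := by
    rintro ⟨⟨i, j⟩, hr⟩
    obtain ⟨⟨k, l⟩, hq⟩ := q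
    simp only [Prod.mk.injEq, Subtype.mk.injEq] at *
    constructor
    · rintro (h | ⟨rfl, rfl⟩)
      · exact h
      · exact ⟨le_antisymm hq hr, le_antisymm hr hq⟩
    · exact Or.inl
  simp [Matrix.mulVec, dotProduct, Dup, h]

theorem Dup_gram_isUnit (n : ℕ) : IsUnit ((Dup n)ᵀ * Dup n) := by
  rw [← Matrix.mulVec_injective_iff_isUnit]
  intro x y hxy
  have h0 : ((Dup n)ᵀ * Dup n) *ᵥ (x - y) = 0 := by
    rw [Matrix.mulVec_sub]
    exact sub_eq_zero.mpr hxy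
  have h1 : (Dup n *ᵥ (x - y)) ⬝ᵥ (Dup n *ᵥ (x - y)) = 0 := by
    rw [Matrix.dotProduct_mulVec, ← Matrix.mulVec_transpose, Matrix.mulVec_mulVec, h0,
      zero_dotProduct]
  have h2 := dotProduct_self_eq_zero.mp h1
  funext q
  have h3 := Dup_mulVec_apply n (x - y) q
  rw [h2] at h3
  exact sub_eq_zero.mp h3.symm

theorem trace_mat_eq_dot (n : ℕ) (u v : Fin n × Fin n → ℝ) :
    ((mat u)ᵀ * mat v).trace = u ⬝ᵥ v := by
  simp only [Matrix.trace, Matrix.diag, Matrix.mul_apply, Matrix.transpose_apply, mat, dotProduct,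
    Fintype.sum_prod_type]
  exact Finset.sum_comm

/-- For all `a, b : P → ℝ`,
`⟨a,b⟩ = ⟨mat(D·((DᵀD)⁻¹·a)), mat(D·b)⟩_F`: the correct lifting of a gradient
vector from `ℝ^{n(n+1)/2}` to a symmetric matrix is `a ↦ mat(D·(DᵀD)⁻¹·a)`. -/
theorem dot_eq_frobenius_of_correct_lifting (n : ℕ) (a b : SymIdx n → ℝ) :
    a ⬝ᵥ b =
      ((mat (Dup n *ᵥ (((Dup n)ᵀ * Dup n)⁻¹ *ᵥ a)))ᵀ * mat (Dup n *ᵥ b)).trace := by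
  have hu := (Matrix.isUnit_iff_isUnit_det _).mp (Dup_gram_isUnit n)
  rw [trace_mat_eq_dot, Matrix.dotProduct_mulVec, ← Matrix.mulVec_transpose, Matrix.mulVec_mulVec,
    Matrix.mulVec_mulVec, Matrix.mul_nonsing_inv _ hu, Matrix.one_mulVec]
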